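/- Let a, b > 1 and c₁, c₂ > 0, and suppose c₁ i^{−a} ≤ λ_i ≤ c₂ i^{−a} for all 1 ≤ i ≤ d. Set w̄^{(i)} = i^{(a−b)/2} for each i. Then there is a constant c > 0 depending only on c₁ and b such that whenever d ≥ (c₁ T/σ²)^{1/b} ≥ 1, for every estimator ŵ (any measurable map of the T observations of the Gaussian sequence observation model, and possibly an additional independent source of randomness, into ℝ^d), sup over all w* with |w*^{(i)}| ≤ i^{(a−b)/2} for every i of the expected excess risk E[ ½ Σ_{i=1}^d λ_i (ŵ^{(i)} − w*^{(i)})² ] is at least c · T^{−1 + 1/b} · σ^{2 − 2/b}. -/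

import Mathlib

/-!
The proof is Assouad's method on the hypercube `∏ i, {-δ i, δ i}`. Relative to the law at the
midpoint of two parameters, the two observation laws have densities whose product is a *constant*,
because the data-dependent parts of the exponents cancel; this constant tensorizes. For densities
`p`, `q` the Bayes risk of separating `θ₀` from `θ₁` is `(θ₀ - θ₁)² ∫ p q / (p + q)`, which is
bounded below since `1 / (p + q)` lies above its tangent at the mean value `p + q = 2`. Averaging
over the hypercube with `λ i * (δ i)² = min (λ i * (r i)²) (σ² / T)` bounds the minimax risk over
the box `|w i| ≤ r i` below by a multiple of `∑ i, min (λ i * (r i)²) (σ² / T)`. Under the power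
law the noise level `σ² / T` is the smaller term for all `i ≤ K = (c₁ T / σ²)^(1/b)`, so the sum
is at least `⌊K⌋ σ² / T`.
-/

open MeasureTheory ProbabilityTheory

noncomputable section

/-- The joint law of the `T` observations in the Gaussian sequence observation model:
`X_0, …, X_{T−1}` are i.i.d. random vectors in `ℝ^d` with independent coordinates
`X_t^{(i)} ∼ N(λ_i w^{(i)}, λ_i σ²)`. -/
def obsLaw (d T : ℕ) (lam : Fin d → ℝ) (σ : ℝ) (w : Fin d → ℝ) :
    Measure (Fin T → Fin d → ℝ) :=
  Measure.pi fun _ : Fin T => Measure.pi fun i : Fin d =>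
    gaussianReal (lam i * w i) (Real.toNNReal (lam i * σ ^ 2))

open Function
open scoped ENNReal NNReal

theorem indicator_univ_pi_prod {ι : Type*} [Fintype ι] {α : ι → Type*} (s : ∀ i, Set (α i))
    (f : ∀ i, α i → ℝ≥0∞) (x : ∀ i, α i) :
    (Set.univ.pi s).indicator (fun x ↦ ∏ i, f i (x i)) x = ∏ i, (s i).indicator (f i) (x i) := by
  by_cases hx : x ∈ Set.univ.pi s
  · rw [Set.indicator_of_mem hx]
    exact Finset.prod_congr rfl fun i _ ↦ (Set.indicator_of_mem (hx i trivial) _).symm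
  · obtain ⟨i, hi⟩ : ∃ i, x i ∉ s i := by simpa [Set.mem_pi] using hx
    rw [Set.indicator_of_notMem hx]
    exact (Finset.prod_eq_zero (Finset.mem_univ i) (Set.indicator_of_notMem hi _)).symm

section ProductDensity

variable {ι : Type*} [Fintype ι] {α : ι → Type*} [∀ i, MeasurableSpace (α i)]

theorem lintegral_pi_prod_eq_prod_lintegral (μ : ∀ i, Measure (α i))
    [∀ i, IsProbabilityMeasure (μ i)] {f : ∀ i, α i → ℝ≥0∞} (hf : ∀ i, Measurable (f i)) :
    ∫⁻ x, ∏ i, f i (x i) ∂Measure.pi μ = ∏ i, ∫⁻ x, f i x ∂μ i := by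
  have hindep : iIndepFun (fun i (x : ∀ i, α i) ↦ f i (x i)) (Measure.pi μ) :=
    iIndepFun_pi fun i ↦ (hf i).aemeasurable
  exact (lintegral_prod_eq_prod_lintegral_of_indepFun Finset.univ _ hindep
    fun i ↦ (hf i).comp (measurable_pi_apply i)).trans <|
      Finset.prod_congr rfl fun i _ ↦ (measurePreserving_eval μ i).lintegral_comp (hf i)

theorem pi_withDensity_eq_withDensity_pi (μ : ∀ i, Measure (α i))
    [∀ i, IsProbabilityMeasure (μ i)] {f : ∀ i, α i → ℝ≥0∞} (hf : ∀ i, Measurable (f i))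
    [∀ i, SigmaFinite ((μ i).withDensity (f i))] :
    Measure.pi (fun i ↦ (μ i).withDensity (f i)) =
      (Measure.pi μ).withDensity fun x ↦ ∏ i, f i (x i) := by
  refine Measure.pi_eq fun s hs ↦ ?_
  rw [withDensity_apply _ (.univ_pi hs), ← lintegral_indicator (.univ_pi hs)]
  simp_rw [indicator_univ_pi_prod]
  rw [lintegral_pi_prod_eq_prod_lintegral μ fun i ↦ (hf i).indicator (hs i)]
  exact Finset.prod_congr rfl fun i _ ↦ by
    rw [withDensity_apply _ (hs i), lintegral_indicator (hs i)]

end ProductDensity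

/-- `DensityOverlap κ P Q` says that `P` and `Q` have densities, with respect to a common
probability measure, whose product is everywhere at least `κ`. This is a pointwise form of a lower
bound `√κ` on the Hellinger affinity `∫ √(dP dQ)`; it is preserved by products in the same way. -/
def DensityOverlap {Ω : Type*} [MeasurableSpace Ω] (κ : ℝ) (P Q : Measure Ω) : Prop :=
  ∃ (μ : Measure Ω) (p q : Ω → ℝ), IsProbabilityMeasure μ ∧
    Measurable p ∧ Measurable q ∧ (∀ x, 0 ≤ p x) ∧ (∀ x, 0 ≤ q x) ∧
    P = μ.withDensity (fun x ↦ ENNReal.ofReal (p x)) ∧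
    Q = μ.withDensity (fun x ↦ ENNReal.ofReal (q x)) ∧ ∀ x, κ ≤ p x * q x

namespace DensityOverlap

variable {Ω : Type*} [MeasurableSpace Ω]

theorem pi {ι : Type*} [Fintype ι] {α : ι → Type*} [∀ i, MeasurableSpace (α i)] {κ : ι → ℝ}
    {P Q : ∀ i, Measure (α i)} (hκ : ∀ i, 0 ≤ κ i) (h : ∀ i, DensityOverlap (κ i) (P i) (Q i)) :
    DensityOverlap (∏ i, κ i) (Measure.pi P) (Measure.pi Q) := by
  choose μ p q hμ hp hq hp₀ hq₀ hP hQ hpq using h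
  refine ⟨Measure.pi μ, fun x ↦ ∏ i, p i (x i), fun x ↦ ∏ i, q i (x i), inferInstance,
    by fun_prop, by fun_prop, fun x ↦ Finset.prod_nonneg fun i _ ↦ hp₀ i _,
    fun x ↦ Finset.prod_nonneg fun i _ ↦ hq₀ i _, ?_, ?_, fun x ↦ ?_⟩
  · simp_rw [ENNReal.ofReal_prod_of_nonneg fun i _ ↦ hp₀ i _, funext hP]
    exact pi_withDensity_eq_withDensity_pi μ fun i ↦ (hp i).ennreal_ofReal
  · simp_rw [ENNReal.ofReal_prod_of_nonneg fun i _ ↦ hq₀ i _, funext hQ]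
    exact pi_withDensity_eq_withDensity_pi μ fun i ↦ (hq i).ennreal_ofReal
  · rw [← Finset.prod_mul_distrib]
    exact Finset.prod_le_prod (fun i _ ↦ hκ i) fun i _ ↦ hpq i _

theorem prod_right {κ : ℝ} {P Q : Measure Ω} (h : DensityOverlap κ P Q) {Ω' : Type*}
    [MeasurableSpace Ω'] (ν : Measure Ω') [IsProbabilityMeasure ν] :
    DensityOverlap κ (P.prod ν) (Q.prod ν) := by
  obtain ⟨μ, p, q, hμ, hp, hq, hp₀, hq₀, rfl, rfl, hpq⟩ := h
  exact ⟨μ.prod ν, p ∘ Prod.fst, q ∘ Prod.fst, inferInstance, by fun_prop, by fun_prop,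
    fun x ↦ hp₀ _, fun x ↦ hq₀ _, prod_withDensity_left hp.ennreal_ofReal,
    prod_withDensity_left hq.ennreal_ofReal, fun x ↦ hpq _⟩

end DensityOverlap

/-- The last term comes from the tangent line `1 / s ≥ 1 - s / 4` at `s = 2`, the mean of `p + q`
when `p` and `q` are values of probability densities. -/
theorem mul_sq_sub_le_weighted_sq_add {κ p q : ℝ} (hκ : 0 ≤ κ) (hp : 0 ≤ p) (hq : 0 ≤ q)
    (hpq : κ ≤ p * q) (f θ₀ θ₁ : ℝ) :
    κ * (θ₀ - θ₁) ^ 2 ≤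
      p * (f - θ₀) ^ 2 + q * (f - θ₁) ^ 2 + κ * (θ₀ - θ₁) ^ 2 / 4 * (p + q) := by
  rcases hκ.eq_or_lt with rfl | hκ
  · simp only [zero_mul, zero_div, add_zero]
    positivity
  have hs : 0 < p + q := (add_nonneg hp hq).lt_of_ne fun h ↦ by nlinarith
  have hbayes : κ * (θ₀ - θ₁) ^ 2 ≤ (p + q) * (p * (f - θ₀) ^ 2 + q * (f - θ₁) ^ 2) := calc
    κ * (θ₀ - θ₁) ^ 2 ≤ p * q * (θ₀ - θ₁) ^ 2 := by gcongr
    _ ≤ p * q * (θ₀ - θ₁) ^ 2 + (p * (f - θ₀) + q * (f - θ₁)) ^ 2 :=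
      le_add_of_nonneg_right (sq_nonneg _)
    _ = (p + q) * (p * (f - θ₀) ^ 2 + q * (f - θ₁) ^ 2) := by ring
  have htangent : 0 ≤ κ * (θ₀ - θ₁) ^ 2 * (1 - (p + q) / 2) ^ 2 := by positivity
  refine le_of_mul_le_mul_left ?_ hs
  linear_combination hbayes + htangent

section TwoPoint

variable {Ω : Type*} [MeasurableSpace Ω]

theorem ofReal_le_lintegral_density_mul_sq_add {κ : ℝ} (hκ : 0 ≤ κ) {μ : Measure Ω}
    [IsProbabilityMeasure μ] {p q f : Ω → ℝ} (hp : Measurable p) (hq : Measurable q)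
    (hf : Measurable f) (hp₀ : ∀ x, 0 ≤ p x) (hq₀ : ∀ x, 0 ≤ q x)
    (hp₁ : ∫⁻ x, ENNReal.ofReal (p x) ∂μ = 1) (hq₁ : ∫⁻ x, ENNReal.ofReal (q x) ∂μ = 1)
    (hpq : ∀ x, κ ≤ p x * q x) (θ₀ θ₁ : ℝ) :
    ENNReal.ofReal (κ * (θ₀ - θ₁) ^ 2 / 2) ≤
      ∫⁻ x, ENNReal.ofReal (p x * (f x - θ₀) ^ 2 + q x * (f x - θ₁) ^ 2) ∂μ := by
  set c : ℝ := κ * (θ₀ - θ₁) ^ 2 / 2 with hc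
  have hc₀ : 0 ≤ c := by positivity
  have lintegral_penalty : ∫⁻ x, ENNReal.ofReal (c / 2 * (p x + q x)) ∂μ = ENNReal.ofReal c := by
    simp_rw [ENNReal.ofReal_mul (by positivity : 0 ≤ c / 2), ENNReal.ofReal_add (hp₀ _) (hq₀ _)]
    rw [lintegral_const_mul _ (by fun_prop), lintegral_add_left (by fun_prop), hp₁, hq₁,
      one_add_one_eq_two, ← ENNReal.ofReal_ofNat, ← ENNReal.ofReal_mul (by positivity),
      div_mul_cancel₀ _ two_ne_zero]
  refine (ENNReal.add_le_add_iff_right (ENNReal.ofReal_ne_top (r := c))).1 ?_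
  calc
    ENNReal.ofReal c + ENNReal.ofReal c = ∫⁻ _, ENNReal.ofReal (κ * (θ₀ - θ₁) ^ 2) ∂μ := by
      rw [← ENNReal.ofReal_add hc₀ hc₀, hc, add_halves]
      simp
    _ ≤ ∫⁻ x, (ENNReal.ofReal (p x * (f x - θ₀) ^ 2 + q x * (f x - θ₁) ^ 2) +
          ENNReal.ofReal (c / 2 * (p x + q x))) ∂μ := by
      gcongr with x
      have := hp₀ x
      have := hq₀ x
      rw [← ENNReal.ofReal_add (by positivity) (by positivity)]
      refine ENNReal.ofReal_le_ofReal ?_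
      linear_combination mul_sq_sub_le_weighted_sq_add hκ (hp₀ x) (hq₀ x) (hpq x) (f x) θ₀ θ₁
    _ = _ := by rw [lintegral_add_left (by fun_prop), lintegral_penalty]

theorem DensityOverlap.ofReal_le_lintegral_sq_add_lintegral_sq {κ : ℝ} {P Q : Measure Ω}
    [IsProbabilityMeasure P] [IsProbabilityMeasure Q] (h : DensityOverlap κ P Q) (hκ : 0 ≤ κ)
    {f : Ω → ℝ} (hf : Measurable f) (θ₀ θ₁ : ℝ) :
    ENNReal.ofReal (κ * (θ₀ - θ₁) ^ 2 / 2) ≤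
      ∫⁻ x, ENNReal.ofReal ((f x - θ₀) ^ 2) ∂P + ∫⁻ x, ENNReal.ofReal ((f x - θ₁) ^ 2) ∂Q := by
  obtain ⟨μ, p, q, hμ, hp, hq, hp₀, hq₀, rfl, rfl, hpq⟩ := h
  have lintegral_density {g : Ω → ℝ}
      (hg : IsProbabilityMeasure (μ.withDensity fun x ↦ ENNReal.ofReal (g x))) :
      ∫⁻ x, ENNReal.ofReal (g x) ∂μ = 1 := by
    rw [← setLIntegral_univ, ← withDensity_apply _ .univ, measure_univ]
  refine (ofReal_le_lintegral_density_mul_sq_add hκ hp hq hf hp₀ hq₀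
    (lintegral_density inferInstance) (lintegral_density inferInstance) hpq θ₀ θ₁).trans_eq ?_
  rw [lintegral_withDensity_eq_lintegral_mul _ (by fun_prop) (by fun_prop),
    lintegral_withDensity_eq_lintegral_mul _ (by fun_prop) (by fun_prop),
    ← lintegral_add_left (by fun_prop)]
  refine lintegral_congr fun x ↦ ?_
  rw [ENNReal.ofReal_add (mul_nonneg (hp₀ x) (sq_nonneg _)) (mul_nonneg (hq₀ x) (sq_nonneg _)),
    ENNReal.ofReal_mul (hp₀ x), ENNReal.ofReal_mul (hq₀ x), Pi.mul_apply, Pi.mul_apply]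

end TwoPoint

theorem gaussianReal_add_eq_withDensity (m h : ℝ) {v : ℝ≥0} (hv : v ≠ 0) :
    gaussianReal (m + h) v = (gaussianReal m v).withDensity
      fun x ↦ ENNReal.ofReal (Real.exp ((h * (x - m) - h ^ 2 / 2) / v)) := by
  rw [gaussianReal_of_var_ne_zero _ hv, gaussianReal_of_var_ne_zero _ hv,
    ← withDensity_mul _ (measurable_gaussianPDF _ _) (by fun_prop)]
  congr 1
  ext x
  simp only [Pi.mul_apply, gaussianPDF, gaussianPDFReal]
  rw [← ENNReal.ofReal_mul (by positivity), mul_assoc _ (Real.exp _) (Real.exp _), ← Real.exp_add]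
  congr 3
  field_simp
  ring

theorem densityOverlap_gaussianReal (m₀ m₁ : ℝ) {v : ℝ≥0} (hv : v ≠ 0) :
    DensityOverlap (Real.exp (-(m₀ - m₁) ^ 2 / (4 * v))) (gaussianReal m₀ v)
      (gaussianReal m₁ v) := by
  let m := (m₀ + m₁) / 2
  let h := (m₀ - m₁) / 2
  refine ⟨gaussianReal m v, fun x ↦ Real.exp ((h * (x - m) - h ^ 2 / 2) / v),
    fun x ↦ Real.exp ((-h * (x - m) - (-h) ^ 2 / 2) / v), inferInstance, by fun_prop, by fun_prop,
    fun x ↦ by positivity, fun x ↦ by positivity, ?_, ?_, fun x ↦ ?_⟩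
  · rw [← gaussianReal_add_eq_withDensity _ _ hv, show m + h = m₀ by ring]
  · rw [← gaussianReal_add_eq_withDensity _ _ hv, show m + -h = m₁ by ring]
  · rw [← Real.exp_add]
    refine (congrArg Real.exp ?_).le
    simp only [m, h]
    field_simp
    ring

section Hypercube

variable {ι : Type*} [Fintype ι] [DecidableEq ι]

theorem sum_update_true_add_update_false {M : Type*} [AddCommMonoid M] (g : (ι → Bool) → M)
    (i : ι) : ∑ s, (g (update s i true) + g (update s i false)) = 2 • ∑ s, g s := by
  have flip_involutive : Involutive fun s : ι → Bool ↦ update s i (!s i) := fun s ↦ by simp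
  have add_flip (s : ι → Bool) :
      g (update s i true) + g (update s i false) = g s + g (update s i (!s i)) := by
    nth_rw 3 [← update_eq_self i s]
    cases s i
    · exact add_comm _ _
    · rfl
  calc
    _ = ∑ s, g s + ∑ s, g (update s i (!s i)) := by simp_rw [add_flip, Finset.sum_add_distrib]
    _ = ∑ s, g s + ∑ s, g s := by rw [← Equiv.sum_comp flip_involutive.toPerm g]; rfl
    _ = 2 • ∑ s, g s := (two_nsmul _).symm

theorem sum_le_two_mul_iSup_of_le_update_add_update {ε : ι → ℝ≥0∞} {g : ι → (ι → Bool) → ℝ≥0∞}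
    (h : ∀ i s, ε i ≤ g i (update s i true) + g i (update s i false)) :
    ∑ i, ε i ≤ 2 * ⨆ s, ∑ i, g i s := by
  set N : ℝ≥0∞ := (Fintype.card (ι → Bool) : ℝ≥0∞) with hN
  suffices N * ∑ i, ε i ≤ N * (2 * ⨆ s, ∑ i, g i s) by
    rwa [ENNReal.mul_le_mul_iff_right (by simp [hN]) (by simp [hN])] at this
  calc
    N * ∑ i, ε i = ∑ i, ∑ _s : ι → Bool, ε i := by simp [hN, Finset.mul_sum]
    _ ≤ ∑ i, ∑ s, (g i (update s i true) + g i (update s i false)) := by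
      gcongr with i _ s _
      exact h i s
    _ = 2 * ∑ s, ∑ i, g i s := by
      simp_rw [sum_update_true_add_update_false, nsmul_eq_mul, ← Finset.mul_sum, Nat.cast_ofNat]
      rw [Finset.sum_comm]
    _ ≤ 2 * ∑ _s : ι → Bool, ⨆ s, ∑ i, g i s := by
      gcongr with s _
      exact le_iSup (fun s ↦ ∑ i, g i s) s
    _ = N * (2 * ⨆ s, ∑ i, g i s) := by
      rw [Finset.sum_const, nsmul_eq_mul, mul_left_comm, Finset.card_univ]

end Hypercube

/-- The vertex of the hypercube `∏ i, {-δ i, δ i}` with signs `s`, where `true` stands for `+`. -/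
def signVertex {ι : Type*} (δ : ι → ℝ) (s : ι → Bool) (i : ι) : ℝ :=
  if s i then δ i else -δ i

theorem abs_signVertex {ι : Type*} (δ : ι → ℝ) (s : ι → Bool) (i : ι) :
    |signVertex δ s i| = |δ i| := by
  unfold signVertex
  split_ifs
  · rfl
  · exact abs_neg _

section SequenceModel

variable {d T : ℕ} {lam : Fin d → ℝ} {σ : ℝ}

instance (w : Fin d → ℝ) : IsProbabilityMeasure (obsLaw d T lam σ w) := by
  unfold obsLaw
  infer_instance

theorem densityOverlap_obsLaw (hσ : σ ≠ 0) (hlam : ∀ i, 0 < lam i) (w₀ w₁ : Fin d → ℝ) :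
    DensityOverlap (Real.exp (-(T * ∑ i, lam i * (w₀ i - w₁ i) ^ 2) / (4 * σ ^ 2)))
      (obsLaw d T lam σ w₀) (obsLaw d T lam σ w₁) := by
  have overlap_coord (i : Fin d) :
      DensityOverlap (Real.exp (-(lam i * (w₀ i - w₁ i) ^ 2) / (4 * σ ^ 2)))
        (gaussianReal (lam i * w₀ i) (lam i * σ ^ 2).toNNReal)
        (gaussianReal (lam i * w₁ i) (lam i * σ ^ 2).toNNReal) := by
    have hl := hlam i
    have hv : 0 < lam i * σ ^ 2 := by positivity
    convert densityOverlap_gaussianReal (lam i * w₀ i) (lam i * w₁ i) (Real.toNNReal_pos.2 hv).ne'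
      using 2
    rw [Real.coe_toNNReal _ hv.le]
    field_simp
  unfold obsLaw
  convert DensityOverlap.pi (ι := Fin T) (fun _ ↦ by positivity)
    fun _ ↦ DensityOverlap.pi (fun _ ↦ by positivity) overlap_coord using 1
  rw [← Real.exp_sum, Finset.prod_const, Finset.card_univ, Fintype.card_fin, ← Real.exp_nat_mul,
    ← Finset.sum_div, Finset.sum_neg_distrib]
  ring_nf

variable {Ω' : Type*} [MeasurableSpace Ω']

/-- The expected excess risk at `w` of the estimator `what`, whose second argument is an
independent random seed with law `ν`. -/
def excessRisk (lam : Fin d → ℝ) (σ : ℝ) (ν : Measure Ω')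
    (what : (Fin T → Fin d → ℝ) × Ω' → Fin d → ℝ) (w : Fin d → ℝ) : ℝ≥0∞ :=
  ∫⁻ p, ENNReal.ofReal ((1 / 2) * ∑ i, lam i * (what p i - w i) ^ 2)
    ∂((obsLaw d T lam σ w).prod ν)

variable {ν : Measure Ω'} {what : (Fin T → Fin d → ℝ) × Ω' → Fin d → ℝ}

theorem excessRisk_eq_sum (hlam : ∀ i, 0 ≤ lam i) (hwhat : Measurable what) (w : Fin d → ℝ) :
    excessRisk lam σ ν what w = ∑ i, ENNReal.ofReal (lam i / 2) *
      ∫⁻ p, ENNReal.ofReal ((what p i - w i) ^ 2) ∂((obsLaw d T lam σ w).prod ν) := by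
  have measurable_coord (i : Fin d) : Measurable fun p ↦ what p i := by fun_prop
  simp_rw [← lintegral_const_mul _ (((measurable_coord _).sub_const _).pow_const 2).ennreal_ofReal]
  rw [← lintegral_finsetSum _ fun i _ ↦ by fun_prop]
  refine lintegral_congr fun p ↦ ?_
  have half_lam_nonneg (i : Fin d) : 0 ≤ lam i / 2 := div_nonneg (hlam i) zero_le_two
  simp_rw [← ENNReal.ofReal_mul (half_lam_nonneg _)]
  rw [← ENNReal.ofReal_sum_of_nonneg fun i _ ↦ mul_nonneg (half_lam_nonneg i) (sq_nonneg _),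
    Finset.mul_sum]
  simp only [one_div_mul_eq_div, mul_div_right_comm]

variable [IsProbabilityMeasure ν]

theorem ofReal_le_coordRisk_add_coordRisk (hσ : σ ≠ 0) (hlam : ∀ i, 0 < lam i)
    {F : (Fin T → Fin d → ℝ) × Ω' → ℝ} (hF : Measurable F) {w₀ w₁ : Fin d → ℝ} {i : Fin d}
    (hw : ∀ j ≠ i, w₀ j = w₁ j) :
    ENNReal.ofReal
        (Real.exp (-(T * (lam i * (w₀ i - w₁ i) ^ 2)) / (4 * σ ^ 2)) * (w₀ i - w₁ i) ^ 2 / 2) ≤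
      ∫⁻ p, ENNReal.ofReal ((F p - w₀ i) ^ 2) ∂((obsLaw d T lam σ w₀).prod ν) +
        ∫⁻ p, ENNReal.ofReal ((F p - w₁ i) ^ 2) ∂((obsLaw d T lam σ w₁).prod ν) := by
  have overlap := (densityOverlap_obsLaw (T := T) hσ hlam w₀ w₁).prod_right ν
  rw [Fintype.sum_eq_single i fun j hj ↦ by rw [hw j hj]; ring] at overlap
  exact overlap.ofReal_le_lintegral_sq_add_lintegral_sq (by positivity) hF _ _

theorem ofReal_sum_le_two_mul_iSup_excessRisk_signVertex (hσ : σ ≠ 0) (hlam : ∀ i, 0 < lam i)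
    (hwhat : Measurable what) (δ : Fin d → ℝ) :
    ENNReal.ofReal (∑ i, Real.exp (-(T * (lam i * δ i ^ 2)) / σ ^ 2) * (lam i * δ i ^ 2)) ≤
      2 * ⨆ s, excessRisk lam σ ν what (signVertex δ s) := by
  simp_rw [excessRisk_eq_sum (fun i ↦ (hlam i).le) hwhat]
  rw [ENNReal.ofReal_sum_of_nonneg fun i _ ↦ by have := hlam i; positivity]
  refine sum_le_two_mul_iSup_of_le_update_add_update fun i s ↦ ?_
  have differ_only_at (j : Fin d) (hj : j ≠ i) :
      signVertex δ (update s i true) j = signVertex δ (update s i false) j := by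
    simp [signVertex, hj]
  have coord_bound := ofReal_le_coordRisk_add_coordRisk (ν := ν) (T := T) hσ hlam
    ((measurable_pi_apply i).comp hwhat) differ_only_at
  rw [← mul_add]
  refine le_of_eq_of_le ?_ (mul_le_mul_right coord_bound _)
  rw [← ENNReal.ofReal_mul (by have := hlam i; positivity)]
  simp only [signVertex, update_self, if_true, Bool.false_eq_true, if_false]
  ring_nf

theorem ofReal_sum_min_le_iSup_excessRisk (hσ : σ ≠ 0) (hlam : ∀ i, 0 < lam i)
    (hwhat : Measurable what) {r : Fin d → ℝ} (hr : ∀ i, 0 ≤ r i) :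
    ENNReal.ofReal (Real.exp (-1) / 2 * ∑ i, min (lam i * r i ^ 2) (σ ^ 2 / T)) ≤
      ⨆ w ∈ {w : Fin d → ℝ | ∀ i, |w i| ≤ r i}, excessRisk lam σ ν what w := by
  set m : Fin d → ℝ := fun i ↦ min (lam i * r i ^ 2) (σ ^ 2 / T)
  let δ : Fin d → ℝ := fun i ↦ √(m i / lam i)
  have hm₀ (i : Fin d) : 0 ≤ m i :=
    le_min (mul_nonneg (hlam i).le (sq_nonneg _)) (by positivity)
  have lam_mul_δ_sq (i : Fin d) : lam i * δ i ^ 2 = m i := by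
    rw [Real.sq_sqrt (div_nonneg (hm₀ i) (hlam i).le), mul_div_cancel₀ _ (hlam i).ne']
  have m_mul_T_le (i : Fin d) : m i * T ≤ σ ^ 2 :=
    mul_le_of_le_div₀ (sq_nonneg σ) T.cast_nonneg (min_le_right _ _)
  have abs_δ_le (i : Fin d) : |δ i| ≤ r i := by
    rw [abs_of_nonneg (Real.sqrt_nonneg _)]
    refine Real.sqrt_le_iff.2 ⟨hr i, ?_⟩
    rw [div_le_iff₀' (hlam i)]
    exact min_le_left _ _
  have exp_ge (i : Fin d) : Real.exp (-1) ≤ Real.exp (-(T * m i) / σ ^ 2) := by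
    gcongr
    rw [neg_div, neg_le_neg_iff, mul_comm]
    exact div_le_one_of_le₀ (m_mul_T_le i) (sq_nonneg σ)
  have hypercube_bound := ofReal_sum_le_two_mul_iSup_excessRisk_signVertex (ν := ν) hσ hlam hwhat δ
  simp_rw [lam_mul_δ_sq] at hypercube_bound
  calc
    ENNReal.ofReal (Real.exp (-1) / 2 * ∑ i, m i)
        = ENNReal.ofReal (∑ i, Real.exp (-1) * m i) / 2 := by
      rw [← Finset.mul_sum, div_mul_eq_mul_div, ENNReal.ofReal_div_of_pos two_pos,
        ENNReal.ofReal_ofNat]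
    _ ≤ ⨆ s, excessRisk lam σ ν what (signVertex δ s) := by
      refine ENNReal.div_le_of_le_mul' (le_trans (ENNReal.ofReal_le_ofReal ?_) hypercube_bound)
      exact Finset.sum_le_sum fun i _ ↦ mul_le_mul_of_nonneg_right (exp_ge i) (hm₀ i)
    _ ≤ ⨆ w ∈ {w : Fin d → ℝ | ∀ i, |w i| ≤ r i}, excessRisk lam σ ν what w :=
      iSup_le fun s ↦ le_iSup₂_of_le (signVertex δ s)
        (fun i ↦ (abs_signVertex δ s i).trans_le (abs_δ_le i)) le_rfl

end SequenceModel

theorem half_mul_le_sum_of_le {d : ℕ} {K v : ℝ} (hK : 1 ≤ K) (hKd : K ≤ d) (hv : 0 ≤ v)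
    {f : Fin d → ℝ} (hf : ∀ i, 0 ≤ f i) (hvf : ∀ i : Fin d, (i : ℝ) + 1 ≤ K → v ≤ f i) :
    K / 2 * v ≤ ∑ i, f i := by
  have floor_le : ⌊K⌋₊ ≤ d := by exact_mod_cast (Nat.floor_le (by positivity)).trans hKd
  let I : Finset (Fin d) := {i | (i : ℕ) < ⌊K⌋₊}
  have card_I : I.card = ⌊K⌋₊ := by rw [Fin.card_filter_val_lt, min_eq_right floor_le]
  calc
    K / 2 * v ≤ ⌊K⌋₊ * v := by
      gcongr
      exact (Nat.div_two_lt_floor hK).le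
    _ = I.card • v := by rw [card_I, nsmul_eq_mul]
    _ ≤ ∑ i ∈ I, f i := Finset.card_nsmul_le_sum _ _ _ fun i hi ↦ hvf i <| by
      have : (i : ℕ) + 1 ≤ ⌊K⌋₊ := (Finset.mem_filter.1 hi).2
      exact_mod_cast (Nat.le_floor_iff (by positivity)).1 this
    _ ≤ ∑ i, f i := Finset.sum_le_univ_sum_of_nonneg hf

section PowerLaw

variable {a b c₁ t σ : ℝ}

theorem noise_le_signal_of_le_cutoff (hb : 0 < b) (hc₁ : 0 < c₁) (ht : 0 < t) (hσ : 0 < σ)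
    {l x : ℝ} (hx : 0 < x) (hl : c₁ * x ^ (-a) ≤ l) (hxK : x ≤ (c₁ * t / σ ^ 2) ^ (1 / b)) :
    σ ^ 2 / t ≤ l * (x ^ ((a - b) / 2)) ^ 2 := by
  have x_rpow_le : x ^ b ≤ c₁ * t / σ ^ 2 := by
    rw [one_div] at hxK
    exact (Real.le_rpow_inv_iff_of_pos hx.le (by positivity) hb).1 hxK
  calc
    σ ^ 2 / t = c₁ / (c₁ * t / σ ^ 2) := by field_simp
    _ ≤ c₁ / x ^ b := by gcongr
    _ = c₁ * x ^ (-a) * (x ^ ((a - b) / 2)) ^ 2 := by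
      rw [← Real.rpow_mul_natCast hx.le, mul_assoc, ← Real.rpow_add hx, div_eq_mul_inv,
        ← Real.rpow_neg hx.le]
      congr 2
      push_cast
      ring
    _ ≤ l * (x ^ ((a - b) / 2)) ^ 2 := by gcongr

theorem cutoff_mul_noise_eq (hc₁ : 0 < c₁) (ht : 0 < t) (hσ : 0 < σ) :
    (c₁ * t / σ ^ 2) ^ (1 / b) * (σ ^ 2 / t) =
      c₁ ^ (1 / b) * t ^ (-1 + 1 / b) * σ ^ (2 - 2 / b) := by
  rw [Real.div_rpow (by positivity) (by positivity), Real.mul_rpow hc₁.le ht.le,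
    Real.rpow_add ht, Real.rpow_neg_one, Real.rpow_sub hσ, ← Real.rpow_natCast_mul hσ.le,
    Real.rpow_two, Nat.cast_ofNat, mul_one_div]
  field_simp

theorem minmax_lower_bound_power_law_general (hb : 0 < b) (hc₁ : 0 < c₁) {d T : ℕ} (hσ : 0 < σ)
    {lam : Fin d → ℝ} (hlam : ∀ i : Fin d, c₁ * ((i : ℝ) + 1) ^ (-a) ≤ lam i)
    (hK : 1 ≤ (c₁ * T / σ ^ 2) ^ (1 / b)) (hKd : (c₁ * T / σ ^ 2) ^ (1 / b) ≤ d)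
    {Ω' : Type*} [MeasurableSpace Ω'] {ν : Measure Ω'} [IsProbabilityMeasure ν]
    {what : (Fin T → Fin d → ℝ) × Ω' → Fin d → ℝ} (hwhat : Measurable what) :
    ENNReal.ofReal (Real.exp (-1) / 4 * c₁ ^ (1 / b) * (T : ℝ) ^ (-1 + 1 / b) *
        σ ^ (2 - 2 / b)) ≤
      ⨆ w ∈ {w : Fin d → ℝ | ∀ i : Fin d, |w i| ≤ ((i : ℝ) + 1) ^ ((a - b) / 2)},
        excessRisk lam σ ν what w := by
  have hT : 0 < (T : ℝ) := by
    refine (Nat.cast_nonneg T).lt_of_ne fun h ↦ ?_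
    rw [← h, mul_zero, zero_div, Real.zero_rpow (one_div_pos.2 hb).ne'] at hK
    exact absurd hK one_pos.not_ge
  have hlam₀ (i : Fin d) : 0 < lam i := lt_of_lt_of_le (by positivity) (hlam i)
  refine le_trans (ENNReal.ofReal_le_ofReal ?_)
    (ofReal_sum_min_le_iSup_excessRisk hσ.ne' hlam₀ hwhat fun i ↦ by positivity)
  have sum_min_ge := half_mul_le_sum_of_le hK hKd (v := σ ^ 2 / T) (by positivity)
    (fun i ↦ le_min (mul_nonneg (hlam₀ i).le (sq_nonneg (((i : ℝ) + 1) ^ ((a - b) / 2))))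
      (by positivity : 0 ≤ σ ^ 2 / T))
    fun i hi ↦ le_min
      (noise_le_signal_of_le_cutoff hb hc₁ hT hσ (by positivity) (hlam i) hi) le_rfl
  refine le_of_eq_of_le ?_ (mul_le_mul_of_nonneg_left sum_min_ge (by positivity))
  linear_combination (-Real.exp (-1) / 4) * cutoff_mul_noise_eq (b := b) hc₁ hT hσ

end PowerLaw

/-- Min-max lower bound under polynomially decaying eigenvalues and the source-condition
thresholds `w̄^{(i)} = i^{(a−b)/2}` (display (4.3) of the paper): the min-max risk is at
least `c · T^{−1+1/b} σ^{2−2/b}`, with `c` depending only on `c₁` and `b`. -/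
theorem minmax_lower_bound_power_law :
    ∀ (bexp c₁ : ℝ), 1 < bexp → 0 < c₁ →
      ∃ c : ℝ, 0 < c ∧
        ∀ (a c₂ : ℝ), 1 < a → 0 < c₂ →
        ∀ (d T : ℕ) (σ : ℝ), 0 < σ → 0 < T →
        ∀ (lam : Fin d → ℝ),
          (∀ i, 0 < lam i) →
          -- eigenvalue decay c₁ i^{−a} ≤ λ_i ≤ c₂ i^{−a}
          (∀ i : Fin d, c₁ * ((i : ℝ) + 1) ^ (-a) ≤ lam i ∧
            lam i ≤ c₂ * ((i : ℝ) + 1) ^ (-a)) →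
          -- d ≥ (c₁ T/σ²)^{1/b} ≥ 1
          (1 : ℝ) ≤ (c₁ * T / σ ^ 2) ^ (1 / bexp) →
          (c₁ * T / σ ^ 2) ^ (1 / bexp) ≤ (d : ℝ) →
          -- any estimator, possibly using an independent source of randomness
          ∀ (Ω' : Type) (_ : MeasurableSpace Ω') (ν : Measure Ω'),
            IsProbabilityMeasure ν →
            ∀ (what : (Fin T → Fin d → ℝ) × Ω' → Fin d → ℝ), Measurable what →
            ENNReal.ofReal
                (c * (T : ℝ) ^ (-1 + 1 / bexp) * σ ^ (2 - 2 / bexp)) ≤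
              ⨆ wstar ∈ {w : Fin d → ℝ |
                  ∀ i : Fin d, |w i| ≤ ((i : ℝ) + 1) ^ ((a - bexp) / 2)},
                ∫⁻ p, ENNReal.ofReal
                    ((1 / 2) * ∑ i : Fin d, lam i * (what p i - wstar i) ^ 2)
                  ∂((obsLaw d T lam σ wstar).prod ν) := by
  intro bexp c₁ hb hc₁
  refine ⟨Real.exp (-1) / 4 * c₁ ^ (1 / bexp), by positivity, ?_⟩
  intro a c₂ _ _ d T σ hσ _ lam _ hlam hK hKd Ω' _ ν _ what hwhat
  exact minmax_lower_bound_power_law_general (one_pos.trans hb) hc₁ hσ (fun i ↦ (hlam i).1) hK hKd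
    hwhat
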